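/- Let y ∈ ℝᵐ and A ∈ ℝ^{m×n}, where each column a_j of A satisfies ‖a_j‖₂ = 1. Let 𝒢 = {G₁,…,G_g} be a partition of {1,…,n} into g disjoint nonempty subsets, and let λ > 0. Let x̂ be a minimizer over z ∈ ℝⁿ of λ‖y − Az‖₂² + Σ_{i=1}^{g}‖z_{G_i}‖₂ (the Group LASSO regularizer, i.e., the SGL norm with μ = 1). Suppose indices i and j belong to the same group G_s and x̂_i·x̂_j > 0. Then |x̂_i − x̂_j| ≤ 2λ·√(2(1 − a_iᵀa_j))·‖y‖₂·‖x̂_{G_s}‖₂. -/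

import Mathlib

/-- The ℓ¹-norm of a vector in ℝⁿ. -/
noncomputable def l1 {n : ℕ} (x : Fin n → ℝ) : ℝ := ∑ i, |x i|

/-- The ℓ²-norm of a vector in ℝⁿ. -/
noncomputable def l2 {n : ℕ} (x : Fin n → ℝ) : ℝ := Real.sqrt (∑ i, (x i) ^ 2)

/-- The ℓᵖ-norm of a vector in ℝⁿ. -/
noncomputable def lpNorm {n : ℕ} (p : ℝ) (x : Fin n → ℝ) : ℝ := (∑ i, |x i| ^ p) ^ (1 / p)

/-- A vector is `k`-sparse if it has at most `k` nonzero components. -/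
def IsSparse {n : ℕ} (k : ℕ) (x : Fin n → ℝ) : Prop :=
  (Finset.univ.filter (fun i => x i ≠ 0)).card ≤ k

/-- The `k`-sparsity index of `x` with respect to the ℓ¹-norm. -/
noncomputable def sigma1 {n : ℕ} (k : ℕ) (x : Fin n → ℝ) : ℝ :=
  sInf ((fun z => l1 (x - z)) '' {z | IsSparse k z})

/-- The `k`-sparsity index of `x` with respect to the ℓ²-norm. -/
noncomputable def sigma2 {n : ℕ} (k : ℕ) (x : Fin n → ℝ) : ℝ :=
  sInf ((fun z => l2 (x - z)) '' {z | IsSparse k z})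

/-- The vector agreeing with `x` on `S` and zero elsewhere. -/
def proj {n : ℕ} (S : Finset (Fin n)) (x : Fin n → ℝ) : Fin n → ℝ :=
  fun i => if i ∈ S then x i else 0

/-- `G` is a partition of `{1,…,n}` into `g` disjoint nonempty subsets. -/
def IsPartition {n g : ℕ} (G : Fin g → Finset (Fin n)) : Prop :=
  (∀ i, (G i).Nonempty) ∧ (∀ i j, i ≠ j → Disjoint (G i) (G j)) ∧
    (∀ x : Fin n, ∃ i, x ∈ G i)

/-- The Sparse Group LASSO norm associated to the partition `G` with parameter `μ`. -/
noncomputable def sglNorm {n g : ℕ} (G : Fin g → Finset (Fin n)) (μ : ℝ) (z : Fin n → ℝ) : ℝ :=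
  ∑ i, ((1 - μ) * l1 (proj (G i) z) + μ * l2 (proj (G i) z))

/-- `A` satisfies the Restricted Isometry Property of order `k` with constant `δ`. -/
def RIP {m n : ℕ} (A : Matrix (Fin m) (Fin n) ℝ) (k : ℕ) (δ : ℝ) : Prop :=
  ∀ u : Fin n → ℝ, IsSparse k u →
    (1 - δ) * (l2 u) ^ 2 ≤ (l2 (A.mulVec u)) ^ 2 ∧
      (l2 (A.mulVec u)) ^ 2 ≤ (1 + δ) * (l2 u) ^ 2

/-- `A` satisfies the ℓ₂ robust null space property of order `k` with constants `ρ`, `τ`. -/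
def RNSP {m n : ℕ} (A : Matrix (Fin m) (Fin n) ℝ) (k : ℕ) (ρ τ : ℝ) : Prop :=
  ∀ h : Fin n → ℝ, ∀ S : Finset (Fin n), S.card ≤ k →
    l2 (proj S h) ≤ (ρ / Real.sqrt k) * l1 (proj Sᶜ h) +
      (τ / Real.sqrt k) * l2 (A.mulVec h)

/-!
For an index `i` lying in the group `G_s` only, the optimality condition at a minimizer `x` reads
`x_i = 2 λ ‖x_{G_s}‖ ⟨y - A x, a_i⟩`; where `x_{G_s} = 0`, and the penalty is not differentiable,
both sides vanish. Subtracting the conditions for `i` and `j` and applying Cauchy–Schwarz bounds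
`|x_i - x_j|` by `2 λ ‖x_{G_s}‖ ‖y - A x‖ ‖a_i - a_j‖`, and comparing the objective at `x` and at
`0` gives `‖y - A x‖ ≤ ‖y‖`. For unit columns, `‖a_i - a_j‖² = 2 (1 - ⟨a_i, a_j⟩)`.
-/

open scoped InnerProductSpace Matrix

section InnerProductSpace

variable {E F : Type*} [NormedAddCommGroup E] [InnerProductSpace ℝ E]
  [NormedAddCommGroup F] [InnerProductSpace ℝ F]

lemma hasDerivAt_norm_comp {f : ℝ → E} {f' : E} {t : ℝ} (hf : HasDerivAt f f' t) (h0 : f t ≠ 0) :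
    HasDerivAt (fun u ↦ ‖f u‖) (⟪f t, f'⟫_ℝ / ‖f t‖) t := by
  have hsqrt := hf.norm_sq.sqrt (pow_ne_zero 2 (norm_ne_zero_iff.2 h0))
  simp only [Real.sqrt_sq (norm_nonneg _)] at hsqrt
  convert hsqrt using 1
  rw [mul_div_mul_left _ _ two_ne_zero]

lemma inner_eq_of_forall_mul_norm_sq_add_norm_le {c : ℝ} {r w : F} {p d : E}
    (hmin : ∀ t : ℝ, c * ‖r‖ ^ 2 + ‖p‖ ≤ c * ‖r - t • w‖ ^ 2 + ‖p + t • d‖) :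
    ⟪p, d⟫_ℝ = 2 * c * ‖p‖ * ⟪r, w⟫_ℝ := by
  rcases eq_or_ne p 0 with rfl | hp
  · simp
  have hfit : HasDerivAt (fun t : ℝ ↦ c * ‖r - t • w‖ ^ 2) (c * (2 * ⟪r, -w⟫_ℝ)) 0 := by
    simpa using ((((hasDerivAt_id (0 : ℝ)).smul_const w).const_sub r).norm_sq.const_mul c)
  have hpenalty : HasDerivAt (fun t : ℝ ↦ ‖p + t • d‖) (⟪p, d⟫_ℝ / ‖p‖) 0 := by
    simpa using hasDerivAt_norm_comp (((hasDerivAt_id (0 : ℝ)).smul_const d).const_add p)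
      (by simpa using hp)
  have hstat : c * (2 * ⟪r, -w⟫_ℝ) + ⟪p, d⟫_ℝ / ‖p‖ = 0 :=
    IsLocalMin.hasDerivAt_eq_zero (.of_forall fun t ↦ by simpa using hmin t) (hfit.add hpenalty)
  rw [inner_neg_right] at hstat
  have hp' : ‖p‖ ≠ 0 := norm_ne_zero_iff.2 hp
  field_simp at hstat
  linarith

end InnerProductSpace

section l2

variable {n : ℕ}

lemma l2_eq_norm_toLp (x : Fin n → ℝ) : l2 x = ‖WithLp.toLp 2 x‖ := by
  simp [l2, EuclideanSpace.norm_eq]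

lemma inner_toLp_eq_dotProduct (x y : Fin n → ℝ) :
    ⟪WithLp.toLp 2 x, WithLp.toLp 2 y⟫_ℝ = x ⬝ᵥ y := by
  simp [EuclideanSpace.inner_toLp_toLp, dotProduct_comm]

lemma l2_nonneg (x : Fin n → ℝ) : 0 ≤ l2 x :=
  Real.sqrt_nonneg _

lemma l2_zero : l2 (0 : Fin n → ℝ) = 0 := by
  simp [l2]

lemma abs_dotProduct_le_l2_mul_l2 (x y : Fin n → ℝ) : |x ⬝ᵥ y| ≤ l2 x * l2 y := by
  simpa only [l2_eq_norm_toLp, inner_toLp_eq_dotProduct] using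
    abs_real_inner_le_norm (WithLp.toLp 2 x) (WithLp.toLp 2 y)

lemma l2_sub_eq_sqrt_of_l2_eq_one {x y : Fin n → ℝ} (hx : l2 x = 1) (hy : l2 y = 1) :
    l2 (x - y) = √(2 * (1 - x ⬝ᵥ y)) := by
  rw [l2_eq_norm_toLp] at hx hy ⊢
  have hsq := norm_sub_sq_real (WithLp.toLp 2 x) (WithLp.toLp 2 y)
  rw [hx, hy, inner_toLp_eq_dotProduct] at hsq
  rw [WithLp.toLp_sub, ← Real.sqrt_sq (norm_nonneg _), hsq]
  ring_nf

end l2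

section proj

variable {n : ℕ} {S : Finset (Fin n)} {i : Fin n}

lemma proj_zero : proj S 0 = 0 := by
  ext k
  simp [proj]

lemma proj_apply_of_mem (hi : i ∈ S) (x : Fin n → ℝ) : proj S x i = x i :=
  if_pos hi

lemma proj_add_smul_single_of_mem (hi : i ∈ S) (x : Fin n → ℝ) (t : ℝ) :
    proj S (x + t • Pi.single i 1) = proj S x + t • Pi.single i 1 := by
  ext k
  by_cases hk : k ∈ S
  · simp [proj, hk]
  · simp [proj, hk, ne_of_mem_of_not_mem hi hk |>.symm]

lemma proj_add_smul_single_of_notMem (hi : i ∉ S) (x : Fin n → ℝ) (t : ℝ) :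
    proj S (x + t • Pi.single i 1) = proj S x := by
  ext k
  by_cases hk : k ∈ S
  · simp [proj, hk, ne_of_mem_of_not_mem hk hi]
  · simp [proj, hk]

end proj

lemma IsPartition.mem_iff_eq {n g : ℕ} {G : Fin g → Finset (Fin n)} (hG : IsPartition G)
    {i : Fin n} {s : Fin g} (hi : i ∈ G s) (u : Fin g) : i ∈ G u ↔ u = s :=
  ⟨fun hu ↦ by_contra fun hus ↦ Finset.disjoint_left.1 (hG.2.1 u s hus) hu hi, fun hu ↦ hu ▸ hi⟩

/-- The Group LASSO objective `λ ‖y - A z‖² + ∑ᵤ ‖z_{Gᵤ}‖`, for a finite family of groups `G` that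
may overlap and need not cover all coordinates. -/
noncomputable def groupLassoObjective {m n : ℕ} {ι : Type*} [Fintype ι] (y : Fin m → ℝ)
    (A : Matrix (Fin m) (Fin n) ℝ) (lam : ℝ) (G : ι → Finset (Fin n)) (z : Fin n → ℝ) : ℝ :=
  lam * l2 (y - A *ᵥ z) ^ 2 + ∑ u, l2 (proj (G u) z)

section GroupLasso

variable {m n : ℕ} {ι : Type*} [Fintype ι] {y : Fin m → ℝ} {A : Matrix (Fin m) (Fin n) ℝ}
  {lam : ℝ} {G : ι → Finset (Fin n)} {x : Fin n → ℝ} {i j : Fin n} {s : ι}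

lemma groupLassoObjective_zero : groupLassoObjective y A lam G 0 = lam * l2 y ^ 2 := by
  simp [groupLassoObjective, proj_zero, l2_zero]

lemma l2_residual_le_of_groupLassoObjective_le_zero (hlam : 0 < lam)
    (hx : groupLassoObjective y A lam G x ≤ groupLassoObjective y A lam G 0) :
    l2 (y - A *ᵥ x) ≤ l2 y := by
  have hpenalty : 0 ≤ ∑ u, l2 (proj (G u) x) := Finset.sum_nonneg fun u _ ↦ l2_nonneg _
  rw [groupLassoObjective_zero, groupLassoObjective] at hx
  have hsq : l2 (y - A *ᵥ x) ^ 2 ≤ l2 y ^ 2 := le_of_mul_le_mul_left (by linarith) hlam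
  exact le_of_sq_le_sq hsq (l2_nonneg y)

lemma sum_l2_proj_add_smul_single_sub (hi : ∀ u, i ∈ G u ↔ u = s) (t : ℝ) :
    ∑ u, l2 (proj (G u) (x + t • Pi.single i 1)) - ∑ u, l2 (proj (G u) x) =
      l2 (proj (G s) x + t • Pi.single i 1) - l2 (proj (G s) x) := by
  rw [← Finset.sum_sub_distrib, Finset.sum_eq_single_of_mem s (Finset.mem_univ s),
    proj_add_smul_single_of_mem ((hi s).2 rfl)]
  intro u _ hus
  rw [proj_add_smul_single_of_notMem (mt (hi u).1 hus), sub_self]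

lemma apply_eq_of_forall_groupLassoObjective_le
    (hmin : ∀ z, groupLassoObjective y A lam G x ≤ groupLassoObjective y A lam G z)
    (hi : ∀ u, i ∈ G u ↔ u = s) :
    x i = 2 * lam * l2 (proj (G s) x) * ((y - A *ᵥ x) ⬝ᵥ A.col i) := by
  have hline (t : ℝ) : lam * l2 (y - A *ᵥ x) ^ 2 + l2 (proj (G s) x) ≤
      lam * l2 (y - A *ᵥ x - t • A.col i) ^ 2 + l2 (proj (G s) x + t • Pi.single i 1) := by
    have hz := hmin (x + t • Pi.single i 1)
    rw [groupLassoObjective, groupLassoObjective, Matrix.mulVec_add, Matrix.mulVec_smul,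
      Matrix.mulVec_single_one, ← sub_sub] at hz
    linarith [sum_l2_proj_add_smul_single_sub (x := x) hi t]
  simp only [l2_eq_norm_toLp, WithLp.toLp_sub, WithLp.toLp_add, WithLp.toLp_smul] at hline
  have hstat := inner_eq_of_forall_mul_norm_sq_add_norm_le hline
  rwa [← WithLp.toLp_sub, inner_toLp_eq_dotProduct, inner_toLp_eq_dotProduct, ← l2_eq_norm_toLp,
    dotProduct_single_one, proj_apply_of_mem ((hi s).2 rfl)] at hstat

theorem stmt5_general (hlam : 0 < lam)
    (hmin : ∀ z, groupLassoObjective y A lam G x ≤ groupLassoObjective y A lam G z)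
    (hi : ∀ u, i ∈ G u ↔ u = s) (hj : ∀ u, j ∈ G u ↔ u = s) :
    |x i - x j| ≤ 2 * lam * l2 (A.col i - A.col j) * l2 y * l2 (proj (G s) x) := by
  have hresidual : l2 (y - A *ᵥ x) ≤ l2 y :=
    l2_residual_le_of_groupLassoObjective_le_zero hlam (hmin 0)
  have hcorrelation : |(y - A *ᵥ x) ⬝ᵥ (A.col i - A.col j)| ≤ l2 y * l2 (A.col i - A.col j) :=
    (abs_dotProduct_le_l2_mul_l2 _ _).trans (mul_le_mul_of_nonneg_right hresidual (l2_nonneg _))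
  have hscale : 0 ≤ 2 * lam * l2 (proj (G s) x) := mul_nonneg (by positivity) (l2_nonneg _)
  calc |x i - x j|
      = |2 * lam * l2 (proj (G s) x) * ((y - A *ᵥ x) ⬝ᵥ (A.col i - A.col j))| := by
        rw [dotProduct_sub, mul_sub, ← apply_eq_of_forall_groupLassoObjective_le hmin hi,
          ← apply_eq_of_forall_groupLassoObjective_le hmin hj]
    _ = 2 * lam * l2 (proj (G s) x) * |(y - A *ᵥ x) ⬝ᵥ (A.col i - A.col j)| := by
        rw [abs_mul, abs_of_nonneg hscale]
    _ ≤ 2 * lam * l2 (proj (G s) x) * (l2 y * l2 (A.col i - A.col j)) :=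
        mul_le_mul_of_nonneg_left hcorrelation hscale
    _ = 2 * lam * l2 (A.col i - A.col j) * l2 y * l2 (proj (G s) x) := by ring

end GroupLasso

/-- Grouping effect for the Group LASSO (SGL with μ = 1). -/
theorem stmt5 (m n g : ℕ) (y : Fin m → ℝ) (A : Matrix (Fin m) (Fin n) ℝ)
    (hcols : ∀ j : Fin n, l2 (fun i => A i j) = 1)
    (G : Fin g → Finset (Fin n)) (hG : IsPartition G)
    (lam : ℝ) (hlam : 0 < lam)
    (xh : Fin n → ℝ)
    (hmin : ∀ z : Fin n → ℝ,
      lam * (l2 (y - A.mulVec xh)) ^ 2 + ∑ i, l2 (proj (G i) xh) ≤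
        lam * (l2 (y - A.mulVec z)) ^ 2 + ∑ i, l2 (proj (G i) z))
    (i j : Fin n) (s : Fin g) (hi : i ∈ G s) (hj : j ∈ G s)
    (hprod : 0 < xh i * xh j) :
    |xh i - xh j| ≤ 2 * lam * Real.sqrt (2 * (1 - ∑ r, A r i * A r j)) *
      l2 y * l2 (proj (G s) xh) := by
  have hbound := stmt5_general hlam hmin (hG.mem_iff_eq hi) (hG.mem_iff_eq hj)
  rwa [l2_sub_eq_sqrt_of_l2_eq_one (x := A.col i) (y := A.col j) (hcols i) (hcols j)] at hbound
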